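/- arXiv:2404.14552 — 3 statements merged into one kernel-verified Lean document; each statement's English description precedes it below -/
import Mathlib

section
/- (Uninformativeness of long-horizon inverse kinematics in the counterexample MDP.) In the counterexample MDP, for every integer k ≥ 4 and all states s, s' ∈ S, the number of action sequences a = (a_1, …, a_k) ∈ A^k with apply(s, a) = s' and a_1 = 1 equals the number of action sequences a ∈ A^k with apply(s, a) = s' and a_1 = −1. Consequently, under the uniformly random policy, for every k ≥ 4 the k-step inverse probability P(a_t | s_t = s, s_{t+k} = s') assigns probability 1/2 to each of the two actions whenever s' is reachable from s in exactly k steps. -/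
/-!
Flipping the signs of both of the first two actions changes their sum by `±2 ± 2`, which is `0`
modulo `4`. Hence it does not change the position reached, and as soon as there is a third action it
does not change the recorded last action either (`three_steps_flip`). For `k ≥ 3` this flip is
therefore an involution on the sequences from `s` to `s'` that exchanges those starting with `1`
and those starting with `-1`, so the two counts agree; the probability `1/2` follows.
-/

/-- The action set `A = {-1, 1} ⊆ ℤ` of the counterexample MDP. -/
abbrev Act : Type := {a : ℤ // a = 1 ∨ a = -1}

instance : Fintype Act :=
  Fintype.subtype ({1, -1} : Finset ℤ) (by intro x; simp)

/-- The action `1`. -/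
def act1 : Act := ⟨1, Or.inl rfl⟩

/-- The action `-1`. -/
def actm1 : Act := ⟨-1, Or.inr rfl⟩

/-- The agent-centric state space `S = (ZMod 4) × {-1, 1}` of the counterexample MDP:
a 4-cycle position together with a record of the most recent action. -/
abbrev CState : Type := ZMod 4 × Act

/-- The deterministic transition map `step((x, b), a) = ((x + a) mod 4, a)`. -/
def stepCE (s : CState) (a : Act) : CState := (s.1 + (a.val : ZMod 4), a)

/-- Apply a finite sequence of actions in order. -/
def applyCE (s : CState) (l : List Act) : CState := l.foldl stepCE s

/-- `Nk k s s' a`: the number of action sequences of length `k` leading from `s`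
to `s'` whose first action is `a`. -/
def Nk (k : ℕ) (s s' : CState) (a : Act) : ℕ :=
  (Finset.univ.filter
    (fun v : Fin k → Act =>
      applyCE s (List.ofFn v) = s' ∧ (List.ofFn v).head? = some a)).card

/-- The opposite action. -/
def flipAct (a : Act) : Act := ⟨-a.val, by rcases a with ⟨a, rfl | rfl⟩ <;> simp⟩

lemma flipAct_flipAct (a : Act) : flipAct (flipAct a) = a := by
  apply Subtype.ext
  simp [flipAct]

/-- The third step erases the only trace of the flip, the recorded action. -/
lemma three_steps_flip (s : CState) (a b c : Act) :
    stepCE (stepCE (stepCE s (flipAct a)) (flipAct b)) c = stepCE (stepCE (stepCE s a) b) c := by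
  obtain ⟨x, d⟩ := s
  rcases a with ⟨a, rfl | rfl⟩ <;> rcases b with ⟨b, rfl | rfl⟩ <;>
    simp only [stepCE, flipAct, Prod.mk.injEq, and_true, add_left_inj] <;>
    revert x <;> decide

/-- Flip the first two actions of a sequence and keep the others. -/
def flipTwo {k : ℕ} (v : Fin k → Act) : Fin k → Act :=
  fun i => if i.val < 2 then flipAct (v i) else v i

lemma flipTwo_flipTwo {k : ℕ} (v : Fin k → Act) : flipTwo (flipTwo v) = v := by
  funext i
  by_cases h : i.val < 2 <;> simp [flipTwo, h, flipAct_flipAct]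

lemma applyCE_flipTwo {m : ℕ} (s : CState) (v : Fin (m + 3) → Act) :
    applyCE s (List.ofFn (flipTwo v)) = applyCE s (List.ofFn v) := by
  simp [applyCE, List.ofFn_succ, flipTwo, three_steps_flip]

lemma head?_flipTwo {m : ℕ} (v : Fin (m + 3) → Act) (a : Act)
    (h : (List.ofFn v).head? = some a) :
    (List.ofFn (flipTwo v)).head? = some (flipAct a) := by
  simp only [List.ofFn_succ, List.head?_cons, Option.some.injEq] at h ⊢
  simp [flipTwo, h]

lemma Nk_flipAct (m : ℕ) (s s' : CState) (a : Act) :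
    Nk (m + 3) s s' a = Nk (m + 3) s s' (flipAct a) := by
  unfold Nk
  refine Finset.card_nbij' flipTwo flipTwo ?_ ?_
    (fun v _ => flipTwo_flipTwo v) (fun v _ => flipTwo_flipTwo v)
  · intro v hv
    simp only [Finset.coe_filter, Finset.mem_univ, true_and, Set.mem_ofPred_eq] at hv ⊢
    exact ⟨(applyCE_flipTwo s v).trans hv.1, head?_flipTwo v a hv.2⟩
  · intro v hv
    simp only [Finset.coe_filter, Finset.mem_univ, true_and, Set.mem_ofPred_eq] at hv ⊢
    refine ⟨(applyCE_flipTwo s v).trans hv.1, ?_⟩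
    rw [head?_flipTwo v _ hv.2, flipAct_flipAct]

/-- **Uninformativeness of long-horizon inverse kinematics in the counterexample MDP.**
For every `k ≥ 4` and all states `s, s'`, the number of length-`k` action sequences
from `s` to `s'` starting with action `1` equals the number starting with action `-1`;
consequently, under the uniformly random policy the `k`-step inverse probability
`P(a_t | s_t = s, s_{t+k} = s')` assigns probability `1/2` to each of the two actions
whenever `s'` is reachable from `s` in exactly `k` steps. -/
theorem long_horizon_inverse_kinematics_uninformative
    (k : ℕ) (hk : 4 ≤ k) (s s' : CState) :
    Nk k s s' act1 = Nk k s s' actm1 ∧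
    (∀ a : Act, 0 < Nk k s s' act1 + Nk k s s' actm1 →
      (Nk k s s' a : ℝ) / ((Nk k s s' act1 + Nk k s s' actm1 : ℕ) : ℝ) = 1 / 2) := by
  have key : Nk k s s' act1 = Nk k s s' actm1 := by
    obtain ⟨m, rfl⟩ := Nat.exists_eq_add_of_le' (show 3 ≤ k by omega)
    exact Nk_flipAct m s s' act1
  refine ⟨key, fun a hpos => ?_⟩
  have ha : Nk k s s' a = Nk k s s' actm1 := by
    rcases a with ⟨a, rfl | rfl⟩
    · exact key
    · rfl
  rw [key] at hpos ⊢
  rw [ha]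
  have hne : (Nk k s s' actm1 : ℝ) ≠ 0 := by
    have : Nk k s s' actm1 ≠ 0 := by omega
    exact_mod_cast this
  push_cast
  field_simp
  norm_num
end

section
/- (The counterexample MDP has diameter exactly 3.) In the counterexample MDP: (i) for all states s, s' ∈ S there exist k with 1 ≤ k ≤ 3 and an action sequence a ∈ A^k with apply(s, a) = s'; and (ii) there exist states s, s' ∈ S (for example s = (0, 1) and s' = (1, −1)) such that no action sequence a ∈ A^k with 1 ≤ k ≤ 2 satisfies apply(s, a) = s'. Hence the maximum over pairs (s, s') of the length of the shortest action sequence from s to s' equals 3. -/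
/-- **The counterexample MDP has diameter exactly 3.**
(i) Every state `s'` is reachable from every state `s` by an action sequence of some
length `k` with `1 ≤ k ≤ 3`; and (ii) the state `(1, -1)` is not reachable from
`(0, 1)` by any action sequence of length `1` or `2`.  Hence the maximum over pairs of
the shortest path length equals `3`. -/
theorem counterexample_mdp_diameter_three :
    (∀ s s' : CState, ∃ l : List Act,
        1 ≤ l.length ∧ l.length ≤ 3 ∧ applyCE s l = s') ∧
    (∀ l : List Act, 1 ≤ l.length → l.length ≤ 2 →
        applyCE ((0 : ZMod 4), act1) l ≠ ((1 : ZMod 4), actm1)) := by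
  constructor
  · rintro ⟨x, b⟩ ⟨y, c⟩
    obtain ⟨d, rfl⟩ : ∃ d, y = x + d := ⟨y - x, by ring⟩
    -- The sequence must end in `c`; it is chosen according to the displacement `d`,
    -- the case `d = -c` being covered by `c + c + c = -c` in `ZMod 4`.
    have key : ∀ (d : ZMod 4) (c : Act),
        d = (c.val : ZMod 4) ∨ d = c.val + c.val ∨ d = -(c.val : ZMod 4) + c.val ∨
          d = c.val + c.val + c.val := by
      rintro d ⟨c, rfl | rfl⟩ <;> revert d <;> decide
    rcases key d c with h | h | h | h
    · exact ⟨[c], by simp, by simp, by simp [applyCE, stepCE, h]⟩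
    · exact ⟨[c, c], by simp, by simp, by simp [applyCE, stepCE, h, add_assoc]⟩
    · have hc : -c.val = 1 ∨ -c.val = -1 := by
        have := c.property
        omega
      exact ⟨[⟨-c.val, hc⟩, c], by simp, by simp, by simp [applyCE, stepCE, h]⟩
    · exact ⟨[c, c, c], by simp, by simp, by simp [applyCE, stepCE, h, add_assoc]⟩
  · intro l h1 h2 h
    match l, h1, h2 with
    | [a], _, _ =>
      obtain ⟨hx, rfl⟩ := Prod.mk.inj h
      exact absurd hx (by decide)
    | [a, b], _, _ =>
      -- Two steps change the position by an even amount, so `1` is never reached from `0`.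
      obtain ⟨hx, rfl⟩ := Prod.mk.inj h
      obtain ⟨a, rfl | rfl⟩ := a
      · exact absurd hx (by decide)
      · exact absurd hx (by decide)
end

section
/- (3-step past decodability of the masked counterexample FM-POMDP.) Consider trajectories of the counterexample MDP together with an exogenous counter: fix an initial state s_1 ∈ S, an initial counter c_1 ∈ ZMod 4, and actions a_1, a_2, … ∈ A; define s_{t+1} = step(s_t, a_t) and c_{t+1} = c_t + 1 (in ZMod 4); and define observations o_t ∈ Option S by o_t = some(s_t) if c_t = 0 and o_t = none otherwise. Then: (i) among any four consecutive time steps t−3, t−2, t−1, t there is exactly one step t−j (0 ≤ j ≤ 3) with c_{t−j} = 0; and (ii) there exists a function D : (Option S)^4 × A^3 → S such that for every such trajectory and every t ≥ 4, D((o_{t−3}, o_{t−2}, o_{t−1}, o_t), (a_{t−3}, a_{t−2}, a_{t−1})) = s_t; i.e., the agent-centric state is decodable from the last 4 (partially masked) observations together with the last 3 actions. -/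
/-- The agent-centric state trajectory: `s_0 = s1` and `s_{t+1} = step(s_t, a_t)`. -/
def sTraj (s1 : CState) (a : ℕ → Act) : ℕ → CState
  | 0 => s1
  | t + 1 => stepCE (sTraj s1 a t) (a t)

/-- The exogenous counter: `c_t = c1 + t` in `ZMod 4`. -/
def cTraj (c1 : ZMod 4) (t : ℕ) : ZMod 4 := c1 + (t : ZMod 4)

/-- The masked observation: the state is visible exactly when the counter is `0`. -/
def obsCE (s1 : CState) (c1 : ZMod 4) (a : ℕ → Act) (t : ℕ) : Option CState :=
  if cTraj c1 t = 0 then some (sTraj s1 a t) else none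

theorem cTraj_add (c1 : ZMod 4) (n k : ℕ) : cTraj c1 (n + k) = cTraj c1 n + (k : ZMod 4) := by
  simp [cTraj, add_assoc]

/-- The decoder: take the most recent unmasked observation in the window and replay the
actions taken after it. The last value is arbitrary, since a window of a trajectory always
contains an unmasked observation. -/
def decodeCE :
    (Option CState × Option CState × Option CState × Option CState) →
      (Act × Act × Act) → CState
  | (_, _, _, some s), _ => s
  | (_, _, some s, none), (_, _, a₂) => applyCE s [a₂]
  | (_, some s, none, none), (_, a₁, a₂) => applyCE s [a₁, a₂]
  | (some s, none, none, none), (a₀, a₁, a₂) => applyCE s [a₀, a₁, a₂]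
  | (none, none, none, none), _ => (0, act1)

/-- **3-step past decodability of the masked counterexample FM-POMDP.**
(i) Among any four consecutive time steps `t-3, t-2, t-1, t` (with `t ≥ 3`) there is
exactly one step `t - j` (`0 ≤ j ≤ 3`) at which the counter is `0`, i.e. at which the
state is visible; and (ii) there is a single decoder `D` mapping the last four
(partially masked) observations together with the last three actions to the current
agent-centric state, for every trajectory and every time `t ≥ 3`. -/
theorem masked_counterexample_three_step_past_decodable :
    (∀ (c1 : ZMod 4) (t : ℕ), 3 ≤ t →
      ∃! j : ℕ, j ≤ 3 ∧ cTraj c1 (t - j) = 0) ∧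
    (∃ D : (Option CState × Option CState × Option CState × Option CState) →
        (Act × Act × Act) → CState,
      ∀ (s1 : CState) (c1 : ZMod 4) (a : ℕ → Act) (t : ℕ), 3 ≤ t →
        D (obsCE s1 c1 a (t - 3), obsCE s1 c1 a (t - 2),
            obsCE s1 c1 a (t - 1), obsCE s1 c1 a t)
          (a (t - 3), a (t - 2), a (t - 1)) = sTraj s1 a t) := by
  refine ⟨?_, decodeCE, ?_⟩
  · intro c1 t ht
    obtain ⟨n, rfl⟩ := Nat.exists_eq_add_of_le' ht
    have key : ∀ x : ZMod 4, ∃ j : ℕ, j ≤ 3 ∧ x + ((3 - j : ℕ) : ZMod 4) = 0 ∧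
        ∀ i ≤ 3, x + ((3 - i : ℕ) : ZMod 4) = 0 → i = j := by
      intro x
      -- the counter vanishes `-x` steps after the start of the window
      refine ⟨3 - (-x).val, ?_⟩
      revert x
      decide
    obtain ⟨j, hj, hzero, huniq⟩ := key (cTraj c1 n)
    refine ⟨j, ⟨hj, ?_⟩, ?_⟩
    · show cTraj c1 (n + 3 - j) = 0
      rw [Nat.add_sub_assoc hj, cTraj_add]
      exact hzero
    · rintro i ⟨hi, hi0⟩
      rw [Nat.add_sub_assoc hi, cTraj_add] at hi0
      exact huniq i hi hi0
  · intro s1 c1 a t ht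
    obtain ⟨n, rfl⟩ := Nat.exists_eq_add_of_le' ht
    have e2 : n + 3 - 2 = n + 1 := by omega
    have e1 : n + 3 - 1 = n + 2 := by omega
    rw [Nat.add_sub_cancel, e2, e1]
    simp only [obsCE, cTraj_add]
    generalize cTraj c1 n = x
    fin_cases x <;> rfl
end
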